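/- There is a tall ideal I on ℕ which is Π¹₂ as a subset of the Cantor space 2^ℕ and such that for every x ∈ I⁺ and every family F of finite subsets of ℕ there is an infinite y ⊆ x with y F-homogeneous and y ∈ I⁺. In particular, I does not contain any closed hereditary tall subset of 2^ℕ. -/

import Mathlib

open Set

/-- The Cantor space `2^ℕ`: subsets of `ℕ` identified with their characteristic functions. -/
abbrev Cantor : Type := ℕ → Bool

/-- The subset of `ℕ` coded by a point of Cantor space. -/
def toSet (x : Cantor) : Set ℕ := {n | x n = true}

/-- `s ⊑ z` : the finite set `s` is an initial segment of `z ⊆ ℕ`,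
i.e. `s = z ∩ {0,1,…,n}` for some `n`. -/
def InitSeg (s : Finset ℕ) (z : Set ℕ) : Prop := ∃ n : ℕ, (s : Set ℕ) = z ∩ Set.Iic n

/-- `s ⊑ t` for finite sets `s, t`. -/
def InitSegF (s t : Finset ℕ) : Prop := ∃ n : ℕ, s = t ∩ Finset.Iic n

/-- `B` is a front on the set `x ⊆ ℕ`: all members of `B` are subsets of `x`, any two
members of `B` are `⊑`-incomparable, and every infinite subset of `x` has an initial
segment in `B`. -/
def IsFrontOn (B : Set (Finset ℕ)) (x : Set ℕ) : Prop :=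
  (∀ s ∈ B, (s : Set ℕ) ⊆ x) ∧
  (∀ s ∈ B, ∀ t ∈ B, InitSegF s t → s = t) ∧
  (∀ y : Set ℕ, y ⊆ x → y.Infinite → ∃ s ∈ B, InitSeg s y)

/-- `y` is `F`-homogeneous: either every infinite subset of `y` has an initial segment
in `F`, or no finite subset of `y` belongs to `F`. -/
def Homog (F : Set (Finset ℕ)) (y : Set ℕ) : Prop :=
  (∀ z : Set ℕ, z ⊆ y → z.Infinite → ∃ s ∈ F, InitSeg s z) ∨
  (∀ s : Finset ℕ, (s : Set ℕ) ⊆ y → s ∉ F)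

/-- `I` is an ideal on `ℕ`: a family of subsets of `ℕ` closed under taking subsets
and under finite unions. -/
def IsIdeal (I : Set Cantor) : Prop :=
  (∀ x ∈ I, ∀ y : Cantor, toSet y ⊆ toSet x → y ∈ I) ∧
  (∀ x ∈ I, ∀ y ∈ I, (fun n => x n || y n) ∈ I)

/-- `I` is an `Fσ` subset of the Cantor space. -/
def IsFsigma (I : Set Cantor) : Prop :=
  ∃ C : ℕ → Set Cantor, (∀ n, IsClosed (C n)) ∧ I = ⋃ n, C n

/-- A family `C` is tall if every infinite subset of `ℕ` contains an infinite member of `C`. -/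
def Tall (C : Set Cantor) : Prop :=
  ∀ x : Cantor, (toSet x).Infinite → ∃ y ∈ C, (toSet y).Infinite ∧ toSet y ⊆ toSet x

/-- `S` is a Borel selector for the family `C`. -/
def IsSelector (C : Set Cantor) (S : Cantor → Cantor) : Prop :=
  Measurable S ∧ ∀ x : Cantor,
    toSet (S x) ⊆ toSet x ∧ ((toSet x).Infinite → (toSet (S x)).Infinite) ∧ S x ∈ C

/-- A Borel ideal `I` is uniformly selective. -/
def UnifSelective (I : Set Cantor) : Prop :=
  ∃ F : (ℕ → Cantor) → Cantor, Measurable F ∧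
    ∀ xs : ℕ → Cantor, (∀ n, xs n ∉ I) → (∀ n, toSet (xs (n + 1)) ⊆ toSet (xs n)) →
      F xs ∉ I ∧ ∀ n ∈ toSet (F xs), toSet (F xs) \ Set.Iic n ⊆ toSet (xs n)

/-- A Borel ideal `I` is uniformly `p⁺`. -/
def UnifPplus (I : Set Cantor) : Prop :=
  ∃ G : (ℕ → Cantor) → Cantor, Measurable G ∧
    ∀ xs : ℕ → Cantor, (∀ n, xs n ∉ I) → (∀ n, toSet (xs (n + 1)) ⊆ toSet (xs n)) →
      G xs ∉ I ∧ ∀ n, (toSet (G xs) \ toSet (xs n)).Finite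

/-- `(t n)_{n∈ℕ}` is a partition of `x` into finite sets. -/
def FinPartition (x : Cantor) (t : ℕ → Cantor) : Prop :=
  (∀ n, (toSet (t n)).Finite) ∧
  (∀ m n, m ≠ n → Disjoint (toSet (t m)) (toSet (t n))) ∧
  (⋃ n, toSet (t n)) = toSet x

/-- A Borel ideal `I` is uniformly `q⁺`. -/
def UnifQplus (I : Set Cantor) : Prop :=
  ∃ F : Cantor × (ℕ → Cantor) → Cantor, Measurable F ∧
    ∀ (x : Cantor) (t : ℕ → Cantor), x ∉ I → FinPartition x t →
      toSet (F (x, t)) ⊆ toSet x ∧ F (x, t) ∉ I ∧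
      ∀ n, (toSet (F (x, t)) ∩ toSet (t n)).Subsingleton

/-- The ideal `I` is `q⁺`. -/
def Qplus (I : Set Cantor) : Prop :=
  ∀ (x : Cantor) (t : ℕ → Cantor), x ∉ I → FinPartition x t →
    ∃ y : Cantor, toSet y ⊆ toSet x ∧ y ∉ I ∧
      ∀ n, (toSet y ∩ toSet (t n)).Subsingleton

/-- The ideal `I` is selective. -/
def Selective (I : Set Cantor) : Prop :=
  ∀ xs : ℕ → Cantor, (∀ n, xs n ∉ I) → (∀ n, toSet (xs (n + 1)) ⊆ toSet (xs n)) →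
    ∃ x : Cantor, x ∉ I ∧ ∀ n ∈ toSet x, toSet x \ Set.Iic n ⊆ toSet (xs n)

/-- The ideal generated by `K`: `x ∈ IdealGen K` iff `x ⊆ y₁ ∪ … ∪ y_n` for some
`y₁, …, y_n ∈ K`. -/
def IdealGen (K : Set Cantor) : Set Cantor :=
  {x | ∃ l : List Cantor, l ≠ [] ∧ (∀ y ∈ l, y ∈ K) ∧ toSet x ⊆ ⋃ y ∈ l, toSet y}

/-- `↓K = {x : x ⊆ y for some y ∈ K}`. -/
def Down (K : Set Cantor) : Set Cantor := {x | ∃ y ∈ K, toSet x ⊆ toSet y}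

/-- `C` is hereditary: closed under taking subsets. -/
def Hereditary (C : Set Cantor) : Prop :=
  ∀ x ∈ C, ∀ y : Cantor, toSet y ⊆ toSet x → y ∈ C

/-- `A ⊆ 2^ℕ` is `Σ¹₂`: the projection of a coanalytic subset of `2^ℕ × ℕ^ℕ`. -/
def Sigma12 (A : Set Cantor) : Prop :=
  ∃ C : Set (Cantor × (ℕ → ℕ)), MeasureTheory.AnalyticSet Cᶜ ∧
    A = {x | ∃ w : ℕ → ℕ, (x, w) ∈ C}

/-- `A ⊆ 2^ℕ` is `Π¹₂`: the complement of a `Σ¹₂` set. -/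
def Pi12 (A : Set Cantor) : Prop := Sigma12 Aᶜ

/-!
Every infinite set contains, for each family of finite sets, an infinite homogeneous subset
(Galvin's lemma), and being homogeneous is a coanalytic condition. A coanalytic relation has a
choice function with `Σ¹₂` graph: membership in a coanalytic set is the well-foundedness of a
relation on a countable set, hence amounts to the existence of a rank function into a well-order
of `ℕ`, and one takes a well-order that is as short as possible together with the lexicographically
least rank function into it. Fix such a choice of homogeneous subsets and use it to build a tree of
infinite sets: below each node, put almost disjoint subsets indexed by the families of finite sets,
and shrink the subset with index `F` to the chosen `F`-homogeneous subset. The sets that contain no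
node form the ideal. Heredity, additivity and the absence of closed tall subfamilies come from
homogeneity, definability from the `Σ¹₂` graph of the choice function. For tallness, choose one
point from each node along a branch below a given node: a node contained in the resulting set meets
every node of the branch in an infinite set, and so do all its extensions; hence they all lie on the
branch, which is absurd.
-/

section Galvin

variable {F : Set (Finset ℕ)}

theorem exists_infinite_diagonal {f : Filter ℕ} [f.NeBot] (hf : f ≤ Filter.cofinite)
    {X : Set ℕ} (hX : X ∈ f) {B : Finset ℕ → Set ℕ} (hB : ∀ t, B t ∈ f) :
    ∃ y ⊆ X, y.Infinite ∧ ∀ n ∈ y, ∀ t : Finset ℕ, ↑t ⊆ y ∩ Iio n → n ∈ B t := by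
  have next (m : ℕ) : ∃ n ∈ X, m < n ∧ ∀ t ⊆ Finset.range (m + 1), n ∈ B t := by
    have hlarge : Ioi m ∈ f := hf (by simp [finite_Iic])
    have hdiag : ⋂ t ∈ (Finset.range (m + 1)).powerset, B t ∈ f :=
      (Filter.biInter_finset_mem _).2 fun t _ => hB t
    obtain ⟨n, hn⟩ := Filter.nonempty_of_mem (Filter.inter_mem hX (Filter.inter_mem hlarge hdiag))
    exact ⟨n, hn.1, hn.2.1, fun t ht => mem_iInter₂.1 hn.2.2 t (Finset.mem_powerset.2 ht)⟩
  choose g hgX hg hgB using next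
  let p (k : ℕ) : ℕ := g^[k + 1] 0
  have p_succ (k : ℕ) : p (k + 1) = g (p k) := Function.iterate_succ_apply' g (k + 1) 0
  have hp : StrictMono p := strictMono_nat_of_lt_succ fun k => p_succ k ▸ hg (p k)
  have p_spec (k : ℕ) : ∃ m, p k = g m ∧ ∀ j < k, p j ≤ m := by
    cases k with
    | zero => exact ⟨0, rfl, by simp⟩
    | succ k => exact ⟨p k, p_succ k, fun j hj => hp.monotone (Nat.lt_succ_iff.1 hj)⟩
  refine ⟨range p, ?_, infinite_range_of_injective hp.injective, ?_⟩
  · rintro _ ⟨k, rfl⟩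
    obtain ⟨m, hm, -⟩ := p_spec k
    exact hm ▸ hgX m
  · rintro _ ⟨k, rfl⟩ t ht
    obtain ⟨m, hm, hlt⟩ := p_spec k
    refine hm ▸ hgB m t fun i hi => ?_
    obtain ⟨⟨j, rfl⟩, hjk⟩ := ht hi
    exact Finset.mem_range_succ_iff.2 (hlt j (hp.lt_iff_lt.1 hjk))

/-- The combinatorial forcing notion behind Galvin's lemma, relative to an ultrafilter `U`: `s` is
accepted if every infinite end-extension of `s` whose elements beyond `s` all stay in the
`U`-large sets `B t`, where `t` is the preceding part, has an initial segment in `F`. -/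
def Accepts (U : Ultrafilter ℕ) (F : Set (Finset ℕ)) (s : Finset ℕ) : Prop :=
  ∃ B : Finset ℕ → Set ℕ, (∀ t, B t ∈ U) ∧ ∀ z : Set ℕ, z.Infinite → ∀ m, z ∩ Iio m = s →
    (∀ n ∈ z, m ≤ n → ∀ t : Finset ℕ, ↑t = z ∩ Iio n → n ∈ B t) → ∃ t ∈ F, InitSeg t z

namespace Accepts

variable {U : Ultrafilter ℕ} {s : Finset ℕ}

theorem of_mem (hU : (U : Filter ℕ) ≤ Filter.cofinite) (hs : s ∈ F) : Accepts U F s := by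
  refine ⟨fun _ => Ioi (s.sup id), fun _ => hU (by simp [finite_Iic]),
    fun z _ m hsz hz => ⟨s, hs, s.sup id, ?_⟩⟩
  ext i
  constructor
  · intro hi
    exact ⟨inter_subset_left (hsz ▸ hi), Finset.le_sup (f := id) (Finset.mem_coe.1 hi)⟩
  · rintro ⟨hiz, hi⟩
    by_contra his
    have hmi : m ≤ i := not_lt.1 fun hlt => his (hsz ▸ ⟨hiz, hlt⟩)
    have hfin : (z ∩ Iio i).Finite := (finite_Iio i).inter_of_right z
    have hlt : s.sup id < i := hz i hiz hmi hfin.toFinset hfin.coe_toFinset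
    exact hlt.not_ge hi

theorem of_insert (h : {n | Accepts U F (insert n s)} ∈ U) : Accepts U F s := by
  choose! B hBU hB using fun n (hn : Accepts U F (insert n s)) => hn
  refine ⟨fun t => {k | Accepts U F (insert k s) ∧
    ∀ n ∈ t, Accepts U F (insert n s) → k ∈ B n t}, fun t => ?_, fun z hz m hsz hzB => ?_⟩
  · refine Filter.Eventually.and h ((Filter.eventually_all_finset t).2 fun n _ => ?_)
    by_cases hn : Accepts U F (insert n s)
    · filter_upwards [hBU n hn t] with k hk _ using hk
    · exact .of_forall fun k hk => absurd hk hn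
  · obtain ⟨n, ⟨hnz, hmn⟩, hmin⟩ : ∃ n, IsLeast {n | n ∈ z ∧ m ≤ n} n := by
      obtain ⟨n, hnz, hmn⟩ := hz.exists_gt m
      exact ⟨_, isLeast_csInf ⟨n, hnz, hmn.le⟩⟩
    have hfin : (z ∩ Iio n).Finite := (finite_Iio n).inter_of_right z
    have hn : Accepts U F (insert n s) := (hzB n hnz hmn _ hfin.coe_toFinset).1
    refine hB n hn z hz (n + 1) ?_ fun k hk hnk t ht => ?_
    · ext i
      rw [Finset.coe_insert, mem_insert_iff, ← hsz]
      have hle (hi : i ∈ z) (hmi : m ≤ i) : n ≤ i := hmin ⟨hi, hmi⟩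
      grind
    · refine (hzB k hk (hmn.trans (Nat.le_of_succ_le hnk)) t ht).2 n ?_ hn
      rw [← Finset.mem_coe, ht]
      exact ⟨hnz, hnk⟩

end Accepts

/-- Galvin's lemma. -/
theorem exists_infinite_homog (F : Set (Finset ℕ)) {X : Set ℕ} (hX : X.Infinite) :
    ∃ y ⊆ X, y.Infinite ∧ Homog F y := by
  classical
  have : (Filter.cofinite ⊓ Filter.principal X).NeBot := hX.cofinite_inf_principal_neBot
  let U : Ultrafilter ℕ := Ultrafilter.of (Filter.cofinite ⊓ Filter.principal X)
  have hU : (U : Filter ℕ) ≤ Filter.cofinite := (Ultrafilter.of_le _).trans inf_le_left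
  have hXU : X ∈ U := Filter.le_principal_iff.1 ((Ultrafilter.of_le _).trans inf_le_right)
  by_cases hempty : Accepts U F ∅
  · obtain ⟨B, hBU, hB⟩ := hempty
    obtain ⟨y, hyX, hy, hyB⟩ := exists_infinite_diagonal hU hXU hBU
    refine ⟨y, hyX, hy, .inl fun z hzy hz => hB z hz 0 (by simp) fun n hn _ t ht => ?_⟩
    exact hyB n (hzy hn) t (ht ▸ inter_subset_inter_left _ hzy)
  · obtain ⟨y, hyX, hy, hyB⟩ := exists_infinite_diagonal hU hXU
      (B := fun s => {n | Accepts U F (insert n s) → Accepts U F s}) fun s => by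
        by_cases hs : Accepts U F s
        · exact Filter.univ_mem' fun _ _ => hs
        · filter_upwards [Ultrafilter.compl_mem_iff_notMem.2 (mt Accepts.of_insert hs)] with n hn h
          exact absurd h hn
    refine ⟨y, hyX, hy, .inr fun s hsy hsF => ?_⟩
    suffices hrejected : ∀ s : Finset ℕ, ↑s ⊆ y → ¬ Accepts U F s from
      hrejected s hsy (.of_mem hU hsF)
    intro s
    induction s using Finset.induction_on_max with
    | empty => exact fun _ => hempty
    | insert n s hns ih =>
      intro hsy hacc
      rw [Finset.coe_insert, insert_subset_iff] at hsy
      exact ih hsy.2 (hyB n hsy.1 s (fun i hi => ⟨hsy.2 hi, hns i hi⟩) hacc)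

end Galvin

section Projective

open MeasureTheory

variable {α β : Type*} [TopologicalSpace α] [TopologicalSpace β]

/- Shortcuts: for the nested products below, the search through Mathlib's instance for countable
products exceeds the size limit. -/
instance polishSpace_seq [PolishSpace α] : PolishSpace (ℕ → α) := inferInstance
instance polishSpace_prod [PolishSpace α] [PolishSpace β] : PolishSpace (α × β) := inferInstance

/-- Coanalytic (`Π¹₁`) sets: the complements of analytic sets. -/
def IsCoanalytic (A : Set α) : Prop := AnalyticSet Aᶜ

/-- `Σ¹₂` sets: the projections of coanalytic sets along the Baire space. On the Cantor space this
is `Sigma12`. -/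
def IsSigma12 (A : Set α) : Prop :=
  ∃ C : Set (α × (ℕ → ℕ)), IsCoanalytic C ∧ A = {x | ∃ w, (x, w) ∈ C}

theorem isCoanalytic_forall [PolishSpace α] [MeasurableSpace α] [BorelSpace α]
    [PolishSpace β] [MeasurableSpace β] [BorelSpace β] {p : α → β → Prop}
    (hp : Measurable fun q : α × β => p q.1 q.2) : IsCoanalytic {a | ∀ b, p a b} := by
  have hcompl : {a | ∀ b, p a b}ᶜ = Prod.fst '' {q : α × β | ¬ p q.1 q.2} := by
    ext a
    simp
  rw [IsCoanalytic, hcompl]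
  exact hp.not.setOf.analyticSet.image_of_continuous continuous_fst

namespace IsCoanalytic

theorem of_measurableSet [PolishSpace α] [MeasurableSpace α] [BorelSpace α] {A : Set α}
    (hA : MeasurableSet A) : IsCoanalytic A :=
  hA.compl.analyticSet

theorem of_isClosed [PolishSpace α] {A : Set α} (hA : IsClosed A) : IsCoanalytic A := by
  borelize α
  exact of_measurableSet hA.measurableSet

theorem iInter {ι : Type*} [Countable ι] {A : ι → Set α} (hA : ∀ i, IsCoanalytic (A i)) :
    IsCoanalytic (⋂ i, A i) := by
  rw [IsCoanalytic, compl_iInter]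
  exact AnalyticSet.iUnion hA

theorem inter {A B : Set α} (hA : IsCoanalytic A) (hB : IsCoanalytic B) :
    IsCoanalytic (A ∩ B) := by
  rw [inter_eq_iInter]
  exact iInter (Bool.rec hB hA)

theorem union [T2Space α] {A B : Set α} (hA : IsCoanalytic A) (hB : IsCoanalytic B) :
    IsCoanalytic (A ∪ B) := by
  rw [IsCoanalytic, compl_union, inter_eq_iInter]
  exact AnalyticSet.iInter (Bool.rec hB hA)

theorem preimage [PolishSpace α] [T2Space β] {A : Set β} (hA : IsCoanalytic A) {f : α → β}
    (hf : Continuous f) : IsCoanalytic (f ⁻¹' A) :=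
  AnalyticSet.preimage hA hf

theorem isSigma12_exists [PolishSpace α] [PolishSpace β] [Nonempty β] {A : Set (α × β)}
    (hA : IsCoanalytic A) : IsSigma12 {x | ∃ y, (x, y) ∈ A} := by
  obtain ⟨g, hg, hg_surj⟩ := PolishSpace.exists_nat_nat_continuous_surjective β
  refine ⟨Prod.map id g ⁻¹' A, hA.preimage (continuous_id.prodMap hg), ?_⟩
  ext x
  exact hg_surj.exists

theorem isSigma12 [PolishSpace α] {A : Set α} (hA : IsCoanalytic A) : IsSigma12 A :=
  ⟨Prod.fst ⁻¹' A, hA.preimage continuous_fst, by simp⟩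

end IsCoanalytic

namespace IsSigma12

variable [PolishSpace α]

theorem preimage [T2Space β] {A : Set β} (hA : IsSigma12 A) {f : α → β} (hf : Continuous f) :
    IsSigma12 (f ⁻¹' A) := by
  obtain ⟨C, hC, rfl⟩ := hA
  exact ⟨Prod.map f id ⁻¹' C, hC.preimage (hf.prodMap continuous_id), rfl⟩

theorem inter {A B : Set α} (hA : IsSigma12 A) (hB : IsSigma12 B) : IsSigma12 (A ∩ B) := by
  obtain ⟨C, hC, rfl⟩ := hA
  obtain ⟨D, hD, rfl⟩ := hB
  have hCD : IsCoanalytic {p : α × (ℕ → ℕ) × (ℕ → ℕ) | (p.1, p.2.1) ∈ C ∧ (p.1, p.2.2) ∈ D} :=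
    (hC.preimage (f := fun p : α × (ℕ → ℕ) × (ℕ → ℕ) => (p.1, p.2.1)) (by fun_prop)).inter
      (hD.preimage (f := fun p : α × (ℕ → ℕ) × (ℕ → ℕ) => (p.1, p.2.2)) (by fun_prop))
  convert hCD.isSigma12_exists
  ext x
  simp

theorem exists_snd [PolishSpace β] [Nonempty β] {A : Set (α × β)} (hA : IsSigma12 A) :
    IsSigma12 {x | ∃ y, (x, y) ∈ A} := by
  obtain ⟨C, hC, rfl⟩ := hA
  have hassoc : Continuous fun p : α × β × (ℕ → ℕ) => ((p.1, p.2.1), p.2.2) := by fun_prop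
  convert (hC.preimage hassoc).isSigma12_exists
  simp

theorem iUnion {A : ℕ → Set α} (hA : ∀ n, IsSigma12 (A n)) : IsSigma12 (⋃ n, A n) := by
  choose C hC hA using hA
  have hunion : IsCoanalytic (⋂ n, {p : α × ℕ × (ℕ → ℕ) | p.2.1 ≠ n} ∪
      {p | (p.1, p.2.2) ∈ C n}) := by
    refine .iInter fun n => .union ?_ ((hC n).preimage
      (f := fun p : α × ℕ × (ℕ → ℕ) => (p.1, p.2.2)) (by fun_prop))
    exact .of_isClosed ((isClosed_discrete {n}ᶜ).preimage (continuous_fst.comp continuous_snd))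
  convert hunion.isSigma12_exists
  ext x
  simp [hA, ← imp_iff_not_or]

end IsSigma12

end Projective

section LexMinimal

open Filter Topology

theorem exists_lex_minimal_of_isClosed {β : Type*} [TopologicalSpace β] (s : β → β → Prop)
    [IsWellOrder β s] {S : Set (ℕ → β)} (hS : IsClosed S) (hne : S.Nonempty) :
    ∃ u ∈ S, ∀ v ∈ S, ¬ Pi.Lex (· < ·) (fun {_} => s) v u := by
  let T (n : ℕ) : Set (ℕ → β) := n.rec S fun k A => {v ∈ A | ∀ w ∈ A, ¬ s (w k) (v k)}
  have hT_anti : Antitone T := antitone_nat_of_succ_le fun n => sep_subset _ _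
  have hT_ne (n : ℕ) : (T n).Nonempty := by
    induction n with
    | zero => exact hne
    | succ n ih =>
      obtain ⟨_, ⟨v, hv, rfl⟩, hmin⟩ :=
        (IsWellFounded.wf (r := s)).has_min ((fun v => v n) '' T n) (ih.image _)
      exact ⟨v, hv, fun w hw => hmin _ ⟨w, hw, rfl⟩⟩
  choose v hv using hT_ne
  let u (n : ℕ) : β := v (n + 1) n
  have eq_u {n : ℕ} {w : ℕ → β} (hw : w ∈ T (n + 1)) : w n = u n :=
    Std.Trichotomous.trichotomous (r := s) _ _ ((hv (n + 1)).2 w hw.1)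
      (hw.2 (v (n + 1)) (hv (n + 1)).1)
  have hlim : Tendsto v atTop (𝓝 u) := by
    refine tendsto_pi_nhds.2 fun n => tendsto_const_nhds.congr' ?_
    filter_upwards [eventually_ge_atTop (n + 1)] with k hk
    exact (eq_u (hT_anti hk (hv k))).symm
  refine ⟨u, hS.mem_of_tendsto hlim (.of_forall fun k => hT_anti (Nat.zero_le k) (hv k)), ?_⟩
  rintro w hw ⟨n, heq, hlt⟩
  have hwT (k : ℕ) (hk : k ≤ n) : w ∈ T k := by
    induction k with
    | zero => exact hw
    | succ k ih =>
      refine ⟨ih (Nat.le_of_succ_le hk), fun z hz => ?_⟩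
      rw [heq k hk]
      exact (hv (k + 1)).2 z hz
  exact (hv (n + 1)).2 w (hwT n le_rfl) hlt

theorem pi_lex_comp_iff {ι β γ : Type*} {q : ι → ι → Prop} {s : β → β → Prop} {t : γ → γ → Prop}
    (φ : s ↪r t) {u v : ι → β} :
    Pi.Lex q (fun {_} => t) (φ ∘ u) (φ ∘ v) ↔ Pi.Lex q (fun {_} => s) u v := by
  simp [Pi.Lex, φ.injective.eq_iff, φ.map_rel_iff]

end LexMinimal

section WellFoundedRepresentation

open PiNat TopologicalSpace Topology
open MeasureTheory (AnalyticSet)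

variable {α : Type*} [TopologicalSpace α]

theorem exists_image_cylinder_subset {β : Type*} [TopologicalSpace β] {f : (ℕ → ℕ) → β}
    (hf : Continuous f) {z : ℕ → ℕ} {W : Set β} (hW : W ∈ 𝓝 (f z)) :
    ∃ n, MapsTo f (cylinder z n) W := by
  obtain ⟨_, ⟨v, n, rfl⟩, hz, hsub⟩ :=
    (isTopologicalBasis_cylinders fun _ => ℕ).mem_nhds_iff.1 (hf.continuousAt.preimage_mem_nhds hW)
  exact ⟨n, mem_cylinder_iff_eq.1 hz ▸ hsub⟩

/-- The first coordinates of the values `f w` whose second coordinate begins with `t`, where `w`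
ranges over the cylinder of length `n` around the `k`-th point of a dense sequence. -/
def firstCoords (f : (ℕ → ℕ) → α × (ℕ → ℕ)) (n k : ℕ) (t : Fin n → ℕ) : Set α :=
  {a | ∃ w ∈ cylinder (denseSeq (ℕ → ℕ) k) n, (f w).1 = a ∧ (fun i : Fin n => (f w).2 i) = t}

/-- The Souslin tree of attempts to solve `f w = (x, y)`. Along a branch, the node `(n, k)` records
that `w` agrees below `n` with the `k`-th point of a dense sequence; `PreimageStep f x y c b` says
that `c` extends `b` by one entry and is still consistent with `(x, y)`. -/
def PreimageStep (f : (ℕ → ℕ) → α × (ℕ → ℕ)) (x : α) (y : ℕ → ℕ) (c b : ℕ × ℕ) : Prop :=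
  c.1 = b.1 + 1 ∧ denseSeq (ℕ → ℕ) c.2 ∈ cylinder (denseSeq (ℕ → ℕ) b.2) b.1 ∧
    x ∈ closure (firstCoords f c.1 c.2 fun i => y i)

namespace PreimageStep

variable {f : (ℕ → ℕ) → α × (ℕ → ℕ)} {x : α} {y : ℕ → ℕ}

theorem isOpen_setOf (f : (ℕ → ℕ) → α × (ℕ → ℕ)) (x : α) (c b : ℕ × ℕ) :
    IsOpen {y | PreimageStep f x y c b} := by
  have hcont : Continuous fun (y : ℕ → ℕ) (i : Fin c.1) => y i := by fun_prop
  exact isOpen_const.inter (isOpen_const.inter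
    ((isOpen_discrete {t | x ∈ closure (firstCoords f c.1 c.2 t)}).preimage hcont))

theorem measurable [MeasurableSpace α] [OpensMeasurableSpace α] (f : (ℕ → ℕ) → α × (ℕ → ℕ))
    (c b : ℕ × ℕ) : Measurable fun p : α × (ℕ → ℕ) => PreimageStep f p.1 p.2 c b := by
  refine measurable_const.and (measurable_const.and ?_)
  have hclosure : Measurable fun p : α × (Fin c.1 → ℕ) =>
      p.1 ∈ closure (firstCoords f c.1 c.2 p.2) :=
    measurable_from_prod_countable_left fun t =>
      (isClosed_closure (s := firstCoords f c.1 c.2 t)).measurableSet.mem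
  have hrestrict : Measurable fun p : α × (ℕ → ℕ) => (p.1, fun i : Fin c.1 => p.2 i) := by fun_prop
  exact hclosure.comp hrestrict

theorem exists_descending_chain (h : (x, y) ∈ range f) :
    ∃ u : ℕ → ℕ × ℕ, ∀ n, PreimageStep f x y (u (n + 1)) (u n) := by
  obtain ⟨z, hz⟩ := h
  have happrox (n : ℕ) : ∃ k, denseSeq (ℕ → ℕ) k ∈ cylinder z n :=
    (denseRange_denseSeq (ℕ → ℕ)).exists_mem_open (isOpen_cylinder _ z n) ⟨z, self_mem_cylinder z n⟩
  choose k hk using happrox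
  refine ⟨fun n => (n, k n), fun n => ⟨rfl, ?_, subset_closure ⟨z, ?_, by simp [hz]⟩⟩⟩
  · exact mem_cylinder_iff_eq.1 (hk n) ▸ cylinder_anti z n.le_succ (hk (n + 1))
  · exact (mem_cylinder_comm _ _ _).1 (hk (n + 1))

theorem exists_limit {u : ℕ → ℕ × ℕ} (hu : ∀ n, PreimageStep f x y (u (n + 1)) (u n)) :
    ∃ z, ∀ n, x ∈ closure {a | ∃ w ∈ cylinder z n, (f w).1 = a ∧ ∀ i < n, (f w).2 i = y i} := by
  have hlevel (n : ℕ) : n ≤ (u n).1 := by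
    induction n with
    | zero => exact Nat.zero_le _
    | succ n ih => exact (hu n).1 ▸ Nat.succ_le_succ ih
  let w (n : ℕ) : ℕ → ℕ := denseSeq (ℕ → ℕ) (u n).2
  have hw_succ (n i : ℕ) (hi : i < n) : w (n + 1) i = w n i :=
    (hu n).2.1 i (hi.trans_le (hlevel n))
  have hw (i n : ℕ) (hn : i + 1 ≤ n) : w n i = w (i + 1) i := by
    induction n, hn using Nat.le_induction with
    | base => rfl
    | succ n hn ih => exact (hw_succ n i hn).trans ih
  refine ⟨fun i => w (i + 1) i, fun n => closure_mono ?_ (hu n).2.2⟩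
  rintro a ⟨v, hv, hva, hvy⟩
  refine ⟨v, fun i hi => ?_, hva, fun i hi => ?_⟩
  · rw [hv i (hi.trans ((Nat.lt_succ_self n).trans_le (hlevel (n + 1))))]
    exact hw i (n + 1) (Nat.succ_le_succ hi.le)
  · exact congrFun hvy ⟨i, hi.trans ((Nat.lt_succ_self n).trans_le (hlevel (n + 1)))⟩

theorem mem_range_of_descending_chain [T3Space α] (hf : Continuous f) {u : ℕ → ℕ × ℕ}
    (hu : ∀ n, PreimageStep f x y (u (n + 1)) (u n)) : (x, y) ∈ range f := by
  obtain ⟨z, hz⟩ := exists_limit hu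
  refine ⟨z, Prod.ext ?_ (funext fun i => ?_)⟩
  · by_contra hne
    obtain ⟨K, hK, hK_closed, hKx⟩ :=
      exists_mem_nhds_isClosed_subset (isOpen_compl_singleton.mem_nhds hne)
    obtain ⟨n, hn⟩ := exists_image_cylinder_subset (continuous_fst.comp hf) hK
    refine hKx (closure_minimal ?_ hK_closed (hz n)) rfl
    rintro _ ⟨w, hw, rfl, -⟩
    exact hn hw
  · obtain ⟨n, hn⟩ := exists_image_cylinder_subset ((continuous_apply i).comp
      (continuous_snd.comp hf)) (z := z) (mem_nhds_discrete.2 (mem_singleton _))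
    obtain ⟨_, w, hw, -, hwy⟩ := closure_nonempty_iff.1 ⟨x, hz (max n (i + 1))⟩
    exact (hn (cylinder_anti z (le_max_left _ _) hw)).symm.trans
      (hwy i (Nat.lt_of_succ_le (le_max_right _ _)))

theorem wellFounded_iff [T3Space α] (hf : Continuous f) :
    WellFounded (PreimageStep f x y) ↔ (x, y) ∉ range f := by
  rw [wellFounded_iff_isEmpty_descending_chain, isEmpty_subtype]
  refine ⟨fun h hmem => ?_, fun h u hu => h (mem_range_of_descending_chain hf hu)⟩
  obtain ⟨u, hu⟩ := exists_descending_chain hmem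
  exact h u hu

end PreimageStep

theorem IsCoanalytic.exists_wellFounded_rel [PolishSpace α] [MeasurableSpace α] [BorelSpace α]
    {A : Set (α × (ℕ → ℕ))} (hA : IsCoanalytic A) :
    ∃ R : α → (ℕ → ℕ) → ℕ → ℕ → Prop,
      (∀ b c, Measurable fun p : α × (ℕ → ℕ) => R p.1 p.2 b c) ∧
      (∀ x b c, IsOpen {y | R x y b c}) ∧ ∀ x y, (x, y) ∈ A ↔ WellFounded (R x y) := by
  rw [IsCoanalytic, AnalyticSet] at hA
  obtain hA | ⟨f, hf, hrange⟩ := hA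
  · refine ⟨fun _ _ _ _ => False, fun _ _ => measurable_const, fun _ _ _ => isOpen_const,
      fun x y => iff_of_true ?_ ⟨fun _ => ⟨_, fun _ h => h.elim⟩⟩⟩
    simp [compl_empty_iff.1 hA]
  · refine ⟨fun x y b c => PreimageStep f x y b.unpair c.unpair,
      fun b c => PreimageStep.measurable f _ _, fun x b c => PreimageStep.isOpen_setOf f x _ _,
      fun x y => ?_⟩
    have hcode := Nat.surjective_unpair.wellFounded_iff (s := PreimageStep f x y)
      (r := fun b c => PreimageStep f x y b.unpair c.unpair) Iff.rfl
    rw [hcode, PreimageStep.wellFounded_iff hf, hrange, notMem_compl_iff]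

end WellFoundedRepresentation

section RankedWitnesses

open Ordinal

/-- Sequences of pairs `(y i, ρ i)` such that `ρ` embeds the relation `R y` into `r`. For a
well-order `r` these certify that `R y` is well-founded, and they form a closed set although the
well-foundedness of `R y` is a coanalytic condition on `y`. -/
def rankedWitnesses (R : (ℕ → ℕ) → ℕ → ℕ → Prop) (r : ℕ → ℕ → Prop) : Set (ℕ → ℕ × ℕ) :=
  {u | Function.Injective (Prod.snd ∘ u) ∧ ∀ b c, R (Prod.fst ∘ u) b c → r (u b).2 (u c).2}

variable {R : (ℕ → ℕ) → ℕ → ℕ → Prop} {r r' : ℕ → ℕ → Prop} {u u' : ℕ → ℕ × ℕ}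

theorem isClosed_rankedWitnesses (hR : ∀ b c, IsOpen {y | R y b c}) (r : ℕ → ℕ → Prop) :
    IsClosed (rankedWitnesses R r) := by
  have hfst : Continuous fun u : ℕ → ℕ × ℕ => Prod.fst ∘ u := by fun_prop
  have hinj (b c : ℕ) : IsClosed {u : ℕ → ℕ × ℕ | (u b).2 = (u c).2 → b = c} :=
    isClosed_imp (isOpen_discrete {p : (ℕ × ℕ) × (ℕ × ℕ) | p.1.2 = p.2.2} |>.preimage
      (by fun_prop : Continuous fun u : ℕ → ℕ × ℕ => (u b, u c))) isClosed_const
  have hrank (b c : ℕ) :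
      IsClosed {u : ℕ → ℕ × ℕ | R (Prod.fst ∘ u) b c → r (u b).2 (u c).2} :=
    isClosed_imp ((hR b c).preimage hfst)
      ((isClosed_discrete {p : (ℕ × ℕ) × (ℕ × ℕ) | r p.1.2 p.2.2}).preimage
        (by fun_prop : Continuous fun u : ℕ → ℕ × ℕ => (u b, u c)))
  simp only [rankedWitnesses, Function.Injective, ofPred_and, ofPred_forall]
  exact .inter (isClosed_iInter fun b => isClosed_iInter fun c => hinj b c)
    (isClosed_iInter fun b => isClosed_iInter fun c => hrank b c)

theorem wellFounded_of_mem_rankedWitnesses [IsWellFounded ℕ r] (hu : u ∈ rankedWitnesses R r) :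
    WellFounded (R (Prod.fst ∘ u)) :=
  Subrelation.wf (hu.2 _ _) (InvImage.wf (Prod.snd ∘ u) IsWellFounded.wf)

theorem map_mem_rankedWitnesses (hu : u ∈ rankedWitnesses R r) (φ : r ↪r r') :
    Prod.map id φ ∘ u ∈ rankedWitnesses R r' :=
  ⟨φ.injective.comp hu.1, fun b c h => φ.map_rel_iff.2 (hu.2 b c h)⟩

/-- The requirements that single out one solution `y = Prod.fst ∘ u` of `WellFounded (R y)`: the
well-order `r` is as short as possible (no ranking into `r` is bounded), and `u` is
lexicographically least among the witnesses ranked by `r`. -/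
structure IsSelected (R : (ℕ → ℕ) → ℕ → ℕ → Prop) (r : ℕ → ℕ → Prop) (u : ℕ → ℕ × ℕ) : Prop where
  isWellOrder : IsWellOrder ℕ r
  mem : u ∈ rankedWitnesses R r
  unbounded : ∀ v ∈ rankedWitnesses R r, ∀ n, ∃ i, ¬ r (v i).2 n
  minimal : ∀ v ∈ rankedWitnesses R r, ¬ Pi.Lex (· < ·) (fun {_} => Prod.Lex (· < ·) r) v u

namespace IsSelected

theorem exists_shorter_wellOrder [IsWellOrder ℕ r] {v : ℕ → ℕ × ℕ} (hv : v ∈ rankedWitnesses R r)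
    {n : ℕ} (hn : ∀ i, r (v i).2 n) :
    ∃ (r' : ℕ → ℕ → Prop) (_ : IsWellOrder ℕ r'), (rankedWitnesses R r').Nonempty ∧
      type r' < type r := by
  let φ : (fun i j => r (v i).2 (v j).2) ↪r r := ⟨⟨Prod.snd ∘ v, hv.1⟩, Iff.rfl⟩
  have hwo := φ.isWellOrder
  refine ⟨_, hwo, ⟨fun i => ((v i).1, i), Function.injective_id, hv.2⟩, ?_⟩
  calc type (fun i j => r (v i).2 (v j).2)
      ≤ type (Subrel r (r · n)) := type_le_iff'.2 ⟨φ.codRestrict {m | r m n} hn⟩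
    _ = typein r n := type_subrel r n
    _ < type r := typein_lt_type r n

theorem exists_isSelected (hR : ∀ b c, IsOpen {y | R y b c}) (h : ∃ y, WellFounded (R y)) :
    ∃ r u, IsSelected R r u := by
  let T : Set Ordinal := {o | ∃ (r : ℕ → ℕ → Prop) (_ : IsWellOrder ℕ r),
    (rankedWitnesses R r).Nonempty ∧ type r = o}
  have hT : T.Nonempty := by
    obtain ⟨y, hy⟩ := h
    obtain ⟨r, hle, hr⟩ := (⟨hy⟩ : IsWellFounded ℕ (R y)).exists_well_order_ge
    exact ⟨_, r, hr, ⟨fun i => (y i, i), Function.injective_id, fun b c => hle b c⟩, rfl⟩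
  obtain ⟨r, hr, hne, hmin⟩ := csInf_mem hT
  obtain ⟨u, hu, hu_min⟩ := exists_lex_minimal_of_isClosed
    (Prod.Lex ((· < ·) : ℕ → ℕ → Prop) r) (isClosed_rankedWitnesses hR r) hne
  refine ⟨r, u, hr, hu, fun v hv n => ?_, hu_min⟩
  by_contra! hbounded
  obtain ⟨r', hr', hne', hlt⟩ := exists_shorter_wellOrder hv hbounded
  exact (csInf_le' (s := T) ⟨r', hr', hne', rfl⟩).not_gt (hmin ▸ hlt)

theorem fst_comp_eq_of_initialSeg (h : IsSelected R r u) (h' : IsSelected R r' u')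
    (φ : InitialSeg r r') : Prod.fst ∘ u = Prod.fst ∘ u' := by
  have := h.isWellOrder
  have := h'.isWellOrder
  have hmem := map_mem_rankedWitnesses h.mem φ.toRelEmbedding
  obtain hsurj | ⟨n, hn⟩ := φ.eq_or_principal
  · let ψ : r ≃r r' := RelIso.ofSurjective φ.toRelEmbedding hsurj
    let θ : Prod.Lex ((· < ·) : ℕ → ℕ → Prop) r ↪r Prod.Lex ((· < ·) : ℕ → ℕ → Prop) r' :=
      .prodLexMap (.refl _) φ.toRelEmbedding
    let w : ℕ → ℕ × ℕ := Prod.map id ψ.symm ∘ u'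
    have hw : θ ∘ w = u' := funext fun i => Prod.ext rfl (ψ.apply_symm_apply (u' i).2)
    have hw_min : ¬ Pi.Lex (· < ·) (fun {_} => Prod.Lex (· < ·) r') u' (θ ∘ u) := by
      rw [← hw, pi_lex_comp_iff θ]
      exact h.minimal w (map_mem_rankedWitnesses h'.mem ψ.symm.toRelEmbedding)
    have htri := Pi.trichotomous_lex (β := fun _ : ℕ => ℕ × ℕ) (· < ·)
      (fun {_} => Prod.Lex (· < ·) r') (IsWellFounded.wf (α := ℕ) (r := (· < ·)))
    rw [← htri.trichotomous _ _ (h'.minimal _ hmem) hw_min]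
    rfl
  · obtain ⟨i, hi⟩ := h'.unbounded _ hmem n
    exact absurd ((hn _).1 ⟨_, rfl⟩) hi

theorem fst_comp_eq (h : IsSelected R r u) (h' : IsSelected R r' u') :
    Prod.fst ∘ u = Prod.fst ∘ u' := by
  have := h.isWellOrder
  have := h'.isWellOrder
  obtain φ | φ := InitialSeg.total r r'
  · exact h.fst_comp_eq_of_initialSeg h' φ
  · exact (h'.fst_comp_eq_of_initialSeg h φ).symm

end IsSelected

end RankedWitnesses

section Selector

set_option synthInstance.maxSize 1000

variable {α : Type*}

theorem measurable_apply_countable {ι β : Type*} [MeasurableSpace α] [Countable ι]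
    [MeasurableSpace ι] [MeasurableSingletonClass ι] [MeasurableSpace β] {f : α → ι → β}
    {i : α → ι} (hf : Measurable f) (hi : Measurable i) : Measurable fun a => f a (i a) :=
  (measurable_from_prod_countable_left fun i => measurable_pi_apply i :
    Measurable fun p : (ι → β) × ι => p.1 p.2).comp (hf.prodMk hi)

theorem measurable_boolRel [MeasurableSpace α] {b : α → ℕ → ℕ → Bool} {i j : α → ℕ}
    (hb : Measurable b) (hi : Measurable i) (hj : Measurable j) :
    Measurable fun a => (b a (i a) (j a) : Prop) :=
  (Measurable.of_discrete (f := fun t : Bool => (t : Prop))).comp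
    (measurable_apply_countable (measurable_apply_countable hb hi) hj)

theorem isWellOrder_iff_of_nat {r : ℕ → ℕ → Prop} : IsWellOrder ℕ r ↔
    (∀ i j, ¬ r i j → ¬ r j i → i = j) ∧ ∀ f : ℕ → ℕ, ∃ n, ¬ r (f (n + 1)) (f n) := by
  have hwf : WellFounded r ↔ ∀ f : ℕ → ℕ, ∃ n, ¬ r (f (n + 1)) (f n) := by
    simp [wellFounded_iff_isEmpty_descending_chain, isEmpty_subtype]
  rw [← hwf]
  exact ⟨fun h => ⟨h.trichotomous, h.wf⟩, fun h => { wf := h.2, trichotomous := h.1 }⟩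

theorem isCoanalytic_isWellOrder :
    IsCoanalytic {b : ℕ → ℕ → Bool | IsWellOrder ℕ fun i j => b i j} := by
  simp only [isWellOrder_iff_of_nat, ofPred_and]
  refine .inter (.of_measurableSet ?_) (isCoanalytic_forall ?_)
  · refine Measurable.setOf (.forall fun i => .forall fun j => ?_)
    exact ((measurable_boolRel measurable_id measurable_const measurable_const).not).imp
      ((measurable_boolRel measurable_id measurable_const measurable_const).not.imp
        measurable_const)
  · refine .exists fun n => (measurable_boolRel (by fun_prop) (by fun_prop) (by fun_prop)).not

theorem measurable_mem_rankedWitnesses [MeasurableSpace α] {R : α → (ℕ → ℕ) → ℕ → ℕ → Prop}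
    (hR : ∀ i j, Measurable fun p : α × (ℕ → ℕ) => R p.1 p.2 i j)
    {δ : Type*} [MeasurableSpace δ] {x : δ → α} {b : δ → ℕ → ℕ → Bool}
    {u : δ → ℕ → ℕ × ℕ} (hx : Measurable x) (hb : Measurable b) (hu : Measurable u) :
    Measurable fun p => u p ∈ rankedWitnesses (R (x p)) fun i j => b p i j := by
  have hRu (i j : ℕ) : Measurable fun p => R (x p) (Prod.fst ∘ u p) i j :=
    (hR i j).comp (hx.prodMk (by fun_prop))
  have huv (i : ℕ) : Measurable fun p => u p i := by fun_prop
  refine .and (.forall fun i => .forall fun j => ?_) (.forall fun i => .forall fun j => ?_)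
  · exact ((huv i).snd.eq (huv j).snd).imp measurable_const
  · exact (hRu i j).imp (measurable_boolRel hb (huv i).snd (huv j).snd)

theorem measurable_pi_lex {δ : Type*} [MeasurableSpace δ]
    {b : δ → ℕ → ℕ → Bool} {u v : δ → ℕ → ℕ × ℕ} (hb : Measurable b)
    (hu : Measurable u) (hv : Measurable v) :
    Measurable fun p =>
      Pi.Lex (· < ·) (fun {_} => Prod.Lex (· < ·) fun i j => b p i j) (v p) (u p) := by
  have hu' (i : ℕ) : Measurable fun p => u p i := by fun_prop
  have hv' (i : ℕ) : Measurable fun p => v p i := by fun_prop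
  simp only [Pi.Lex, Prod.lex_def]
  refine .exists fun i => .and (.forall fun j => measurable_const.imp ((hv' j).eq (hu' j))) ?_
  exact ((hv' i).fst.lt (hu' i).fst).or
    (((hv' i).fst.eq (hu' i).fst).and (measurable_boolRel hb (hv' i).snd (hu' i).snd))

theorem isCoanalytic_isSelected [TopologicalSpace α] [PolishSpace α] [MeasurableSpace α]
    [BorelSpace α] {R : α → (ℕ → ℕ) → ℕ → ℕ → Prop}
    (hR : ∀ i j, Measurable fun p : α × (ℕ → ℕ) => R p.1 p.2 i j) :
    IsCoanalytic {p : α × (ℕ → ℕ → Bool) × (ℕ → ℕ × ℕ) |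
      IsSelected (R p.1) (fun i j => p.2.1 i j) p.2.2} := by
  have hmem : IsCoanalytic {p : α × (ℕ → ℕ → Bool) × (ℕ → ℕ × ℕ) |
      p.2.2 ∈ rankedWitnesses (R p.1) fun i j => p.2.1 i j} :=
    .of_measurableSet (measurable_mem_rankedWitnesses hR (by fun_prop) (by fun_prop)
      (by fun_prop)).setOf
  have hminimal : IsCoanalytic {p : α × (ℕ → ℕ → Bool) × (ℕ → ℕ × ℕ) |
      ∀ v, v ∈ rankedWitnesses (R p.1) (fun i j => p.2.1 i j) →
        (∀ n, ∃ i, ¬ p.2.1 (v i).2 n) ∧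
          ¬ Pi.Lex (· < ·) (fun {_} => Prod.Lex (· < ·) fun i j => p.2.1 i j) v p.2.2} := by
    refine isCoanalytic_forall (.imp ?_ (.and ?_ (.not ?_)))
    · exact measurable_mem_rankedWitnesses hR (by fun_prop) (by fun_prop) (by fun_prop)
    · exact .forall fun n => .exists fun i =>
        (measurable_boolRel (by fun_prop) (by fun_prop) (by fun_prop)).not
    · exact measurable_pi_lex (by fun_prop) (by fun_prop) (by fun_prop)
  have hwo := isCoanalytic_isWellOrder.preimage
    (f := fun p : α × (ℕ → ℕ → Bool) × (ℕ → ℕ × ℕ) => p.2.1) (by fun_prop)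
  convert hwo.inter (hmem.inter hminimal) using 1
  ext p
  exact ⟨fun h => ⟨h.isWellOrder, h.mem, fun v hv => ⟨h.unbounded v hv, h.minimal v hv⟩⟩,
    fun ⟨hwo, hmem, h⟩ => ⟨hwo, hmem, fun v hv => (h v hv).1, fun v hv => (h v hv).2⟩⟩

theorem IsCoanalytic.exists_choice [TopologicalSpace α] [PolishSpace α] {A : Set (α × (ℕ → ℕ))}
    (hA : IsCoanalytic A) (hfull : ∀ x, ∃ y, (x, y) ∈ A) :
    ∃ G : α → ℕ → ℕ, (∀ x, (x, G x) ∈ A) ∧ IsSigma12 {p : α × (ℕ → ℕ) | p.2 = G p.1} := by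
  borelize α
  obtain ⟨R, hR, hR_open, hAR⟩ := hA.exists_wellFounded_rel
  have hselect (x : α) : ∃ (b : ℕ → ℕ → Bool) (u : ℕ → ℕ × ℕ),
      IsSelected (R x) (fun i j => b i j) u := by
    obtain ⟨y, hy⟩ := hfull x
    obtain ⟨r, u, hu⟩ := IsSelected.exists_isSelected (hR_open x) ⟨y, (hAR x y).1 hy⟩
    classical exact ⟨fun i j => decide (r i j), u, by simpa using hu⟩
  choose b u hbu using hselect
  refine ⟨fun x => Prod.fst ∘ u x, fun x => ?_, ?_⟩
  · have := (hbu x).isWellOrder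
    exact (hAR _ _).2 (wellFounded_of_mem_rankedWitnesses (hbu x).mem)
  · have hgraph : IsCoanalytic {p : (α × (ℕ → ℕ)) × (ℕ → ℕ → Bool) × (ℕ → ℕ × ℕ) |
        p.1.2 = Prod.fst ∘ p.2.2 ∧ IsSelected (R p.1.1) (fun i j => p.2.1 i j) p.2.2} := by
      exact .inter (.of_isClosed (isClosed_eq (by fun_prop) (by fun_prop)))
        ((isCoanalytic_isSelected hR).preimage (f := fun p :
          (α × (ℕ → ℕ)) × (ℕ → ℕ → Bool) × (ℕ → ℕ × ℕ) => (p.1.1, p.2)) (by fun_prop))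
    convert hgraph.isSigma12_exists using 1
    ext ⟨x, y⟩
    constructor
    · intro hy
      exact ⟨(b x, u x), hy, hbu x⟩
    · rintro ⟨⟨b', u'⟩, hy, hsel⟩
      exact hy.trans (hsel.fst_comp_eq (hbu x))

end Selector

section HomogSelector

/-- The family of finite sets coded by a point of Cantor space, through the numbering
`Encodable.encode` of the finite sets. -/
def codedFamily (F : Cantor) : Set (Finset ℕ) := {s | F (Encodable.encode s) = true}

theorem codedFamily_surjective : Function.Surjective codedFamily := by
  classical
  intro 𝓕
  refine ⟨fun n => decide (n ∈ Encodable.encode '' 𝓕), ?_⟩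
  ext s
  simp [codedFamily]

theorem toSet_boolIndicator (s : Set ℕ) : toSet s.boolIndicator = s :=
  Set.ext fun n => (s.mem_iff_boolIndicator n).symm

theorem toSet_surjective : Function.Surjective toSet :=
  fun s => ⟨_, toSet_boolIndicator s⟩

theorem isCoanalytic_homog : IsCoanalytic {p : (ℕ → ℕ) × Cantor |
    Homog (codedFamily p.2) (range p.1)} := by
  have hcoord (f : ((ℕ → ℕ) × Cantor) × Cantor → Cantor) (hf : Measurable f) (n : ℕ) :
      Measurable fun q => f q n = true := (hf.eval (a := n)).eq_const true
  have hvalue (n : ℕ) : Measurable fun p : (ℕ → ℕ) × Cantor => n ∈ range p.1 :=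
    .exists fun i => (by fun_prop : Measurable fun p : (ℕ → ℕ) × Cantor => p.1 i).eq_const n
  have hinfinite : IsCoanalytic {p : (ℕ → ℕ) × Cantor | ∀ z : Cantor,
      (∀ n, z n = true → n ∈ range p.1) → (∀ m, ∃ n, z n = true ∧ m < n) →
        ∃ s : Finset ℕ, p.2 (Encodable.encode s) = true ∧
          ∃ n, ∀ i, i ∈ s ↔ z i = true ∧ i ≤ n} := by
    have hz (n : ℕ) := hcoord Prod.snd measurable_snd n
    refine isCoanalytic_forall (.imp ?_ (.imp ?_ ?_))
    · exact .forall fun n => (hz n).imp ((hvalue n).comp measurable_fst)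
    · exact .forall fun m => .exists fun n => (hz n).and measurable_const
    · exact .exists fun s => (hcoord (fun q => q.1.2) (by fun_prop) _).and
        (.exists fun n => .forall fun i => measurable_const.iff ((hz i).and measurable_const))
  have hfinite : MeasurableSet {p : (ℕ → ℕ) × Cantor | ∀ s : Finset ℕ,
      (∀ i ∈ s, i ∈ range p.1) → ¬ p.2 (Encodable.encode s) = true} :=
    Measurable.setOf <| .forall fun s =>
      (Measurable.forall fun i => measurable_const.imp (hvalue i)).imp
        ((by fun_prop : Measurable fun p : (ℕ → ℕ) × Cantor =>
          p.2 (Encodable.encode s)).eq_const true).not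
  convert hinfinite.union (.of_measurableSet hfinite) using 1
  ext p
  refine or_congr (toSet_surjective.forall.trans (forall_congr' fun z => ?_)) Iff.rfl
  refine imp_congr Iff.rfl (imp_congr infinite_iff_exists_gt (exists_congr fun s => ?_))
  refine and_congr Iff.rfl (exists_congr fun n => ?_)
  exact Set.ext_iff

/-- `G` selects homogeneous subsequences: for a sequence `e` and a code `F` of a family,
`e ∘ G (e, F)` is a subsequence of `e` with homogeneous range. -/
def IsHomogSelector (G : (ℕ → ℕ) × Cantor → ℕ → ℕ) : Prop :=
  ∀ p, StrictMono (G p) ∧ Homog (codedFamily p.2) (range (p.1 ∘ G p))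

theorem exists_homog_subseq (F : Set (Finset ℕ)) (e : ℕ → ℕ) :
    ∃ h : ℕ → ℕ, StrictMono h ∧ Homog F (range (e ∘ h)) := by
  by_cases he : (range e).Infinite
  · obtain ⟨y, hye, hy, hyF⟩ := exists_infinite_homog F he
    have hpre : (e ⁻¹' y).Infinite := hy.preimage hye
    refine ⟨Nat.nth (· ∈ e ⁻¹' y), Nat.nth_strictMono hpre, ?_⟩
    have hrange : range (Nat.nth (· ∈ e ⁻¹' y)) = e ⁻¹' y := Nat.range_nth_of_infinite hpre
    rwa [range_comp, hrange, image_preimage_eq_of_subset hye]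
  · refine ⟨id, strictMono_id, .inl fun z hz hzinf => ?_⟩
    exact absurd (hzinf.mono hz) he

theorem continuous_pi_comp {X ι κ : Type*} [TopologicalSpace X] [TopologicalSpace ι]
    [DiscreteTopology ι] : Continuous fun p : (ι → X) × (κ → ι) => p.1 ∘ p.2 := by
  have heval : Continuous fun q : (ι → X) × ι => q.1 q.2 :=
    continuous_prod_of_discrete_right.2 continuous_apply
  exact continuous_pi fun k =>
    heval.comp (by fun_prop : Continuous fun p : (ι → X) × (κ → ι) => (p.1, p.2 k))

theorem exists_isHomogSelector : ∃ G : (ℕ → ℕ) × Cantor → ℕ → ℕ, IsHomogSelector G ∧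
    IsSigma12 {p : ((ℕ → ℕ) × Cantor) × (ℕ → ℕ) | p.2 = G p.1} := by
  have hmono : MeasurableSet {p : ((ℕ → ℕ) × Cantor) × (ℕ → ℕ) | StrictMono p.2} :=
    Measurable.setOf <| .forall fun i => .forall fun j =>
      measurable_const.imp (Measurable.lt (by fun_prop) (by fun_prop))
  have hhomog : IsCoanalytic {p : ((ℕ → ℕ) × Cantor) × (ℕ → ℕ) |
      Homog (codedFamily p.1.2) (range (p.1.1 ∘ p.2))} :=
    isCoanalytic_homog.preimage ((continuous_pi_comp.comp
      ((continuous_fst.comp continuous_fst).prodMk continuous_snd)).prodMk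
        (continuous_snd.comp continuous_fst))
  exact ((IsCoanalytic.of_measurableSet hmono).inter hhomog).exists_choice fun p =>
    exists_homog_subseq (codedFamily p.2) p.1

end HomogSelector

section NodeFreeIdeal

open Encodable

/-- The strictly increasing enumeration of the branch of the binary tree determined by `F`, the
finite binary sequences being numbered by `encode`. Distinct branches are almost disjoint. -/
def branchCode (F : Cantor) (j : ℕ) : ℕ := encode (PiNat.res F j)

theorem strictMono_branchCode (F : Cantor) : StrictMono (branchCode F) :=
  strictMono_nat_of_lt_succ fun j => by
    rw [branchCode, branchCode, PiNat.res_succ, encode_list_cons]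
    exact Nat.lt_succ_of_le (Nat.right_le_pair _ _)

theorem finite_range_branchCode_inter {F F' : Cantor} (h : F ≠ F') :
    (range (branchCode F) ∩ range (branchCode F')).Finite := by
  obtain ⟨i, hi⟩ := Function.ne_iff.1 h
  refine ((finite_Iic i).image (branchCode F)).subset ?_
  rintro _ ⟨⟨j, rfl⟩, k, hk⟩
  have hres : PiNat.res F' k = PiNat.res F j := encode_injective hk
  obtain rfl : k = j := by simpa using congrArg List.length hres
  exact mem_image_of_mem _ (not_lt.1 fun hij => hi (PiNat.res_eq_res.1 hres hij).symm)

theorem continuous_branchCode : Continuous branchCode := by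
  refine continuous_pi fun j => ?_
  induction j with
  | zero => exact continuous_const
  | succ j ih =>
    simp only [branchCode, PiNat.res_succ, encode_list_cons]
    exact (continuous_of_discreteTopology (f := fun q : Bool × ℕ =>
      Nat.succ (Nat.pair (encode q.1) q.2))).comp ((continuous_apply j).prodMk ih)

variable {G : (ℕ → ℕ) × Cantor → ℕ → ℕ}

/-- The tree of homogeneous sets determined by `G`, each set given by its enumeration. The children
of a node `e` are homogeneous subsequences of its subsequences `e ∘ branchCode F`, one for each
coded family `F`; the head of the list is the last family. -/
def node (G : (ℕ → ℕ) × Cantor → ℕ → ℕ) : List Cantor → ℕ → ℕ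
  | [] => id
  | F :: l => (node G l ∘ branchCode F) ∘ G (node G l ∘ branchCode F, F)

theorem range_node_append_subset (k l : List Cantor) :
    range (node G (k ++ l)) ⊆ range (node G l) := by
  induction k with
  | nil => rfl
  | cons F k ih =>
    exact ((range_comp_subset_range _ _).trans (range_comp_subset_range _ _)).trans ih

/-- The sets containing no node of the tree determined by `G`. -/
def nodeFreeIdeal (G : (ℕ → ℕ) × Cantor → ℕ → ℕ) : Set Cantor :=
  {x | ∀ l, ¬ range (node G l) ⊆ toSet x}

theorem notMem_nodeFreeIdeal {x : Cantor} :
    x ∉ nodeFreeIdeal G ↔ ∃ l, range (node G l) ⊆ toSet x := by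
  simp [nodeFreeIdeal]

theorem isSigma12_node (hG : IsSigma12 {p : ((ℕ → ℕ) × Cantor) × (ℕ → ℕ) | p.2 = G p.1})
    (n : ℕ) :
    IsSigma12 {e | ∃ l : List Cantor, l.length = n ∧ e = node G l} := by
  induction n with
  | zero =>
    convert (IsCoanalytic.of_isClosed (isClosed_singleton (x := (id : ℕ → ℕ)))).isSigma12 using 1
    ext e
    simp [node]
  | succ n ih =>
    let Q := (ℕ → ℕ) × (ℕ → ℕ) × Cantor × (ℕ → ℕ)
    have hbranch : Continuous fun q : Q => q.2.1 ∘ branchCode q.2.2.1 :=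
      continuous_pi_comp.comp (.prodMk (by fun_prop) (continuous_branchCode.comp (by fun_prop)))
    have hparent : IsSigma12 {q : Q | ∃ l : List Cantor, l.length = n ∧ q.2.1 = node G l} :=
      ih.preimage (f := fun q : Q => q.2.1) (by fun_prop)
    have hselect : IsSigma12 {q : Q | q.2.2.2 = G (q.2.1 ∘ branchCode q.2.2.1, q.2.2.1)} :=
      hG.preimage (f := fun q : Q => ((q.2.1 ∘ branchCode q.2.2.1, q.2.2.1), q.2.2.2))
        ((hbranch.prodMk (by fun_prop)).prodMk (by fun_prop))
    have hcomp : IsSigma12 {q : Q | q.1 = (q.2.1 ∘ branchCode q.2.2.1) ∘ q.2.2.2} :=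
      (IsCoanalytic.of_isClosed (isClosed_eq continuous_fst
        (continuous_pi_comp.comp (hbranch.prodMk (by fun_prop))))).isSigma12
    convert (hparent.inter (hselect.inter hcomp)).exists_snd using 1
    ext e
    constructor
    · rintro ⟨_ | ⟨F, l⟩, hl, rfl⟩
      · simp at hl
      · exact ⟨(node G l, F, G (node G l ∘ branchCode F, F)),
          ⟨l, Nat.succ_injective hl, rfl⟩, rfl, rfl⟩
    · rintro ⟨⟨_, F, h⟩, ⟨l, hl, rfl⟩, hh, he⟩
      obtain rfl : h = G (node G l ∘ branchCode F, F) := hh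
      exact ⟨F :: l, congrArg Nat.succ hl, he⟩

theorem pi12_nodeFreeIdeal
    (hG : IsSigma12 {p : ((ℕ → ℕ) × Cantor) × (ℕ → ℕ) | p.2 = G p.1}) :
    Pi12 (nodeFreeIdeal G) := by
  have hsubset : IsClosed {p : Cantor × (ℕ → ℕ) | ∀ i, p.1 (p.2 i) = true} := by
    rw [ofPred_forall]
    have hcomp : Continuous fun p : Cantor × (ℕ → ℕ) => p.1 ∘ p.2 := continuous_pi_comp
    exact isClosed_iInter fun i => isClosed_eq ((continuous_apply i).comp hcomp) continuous_const
  have hnode : IsSigma12 (⋃ n, {e | ∃ l : List Cantor, l.length = n ∧ e = node G l}) :=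
    .iUnion (isSigma12_node hG)
  have hcompl : IsSigma12 (nodeFreeIdeal G)ᶜ := by
    convert ((IsCoanalytic.of_isClosed hsubset).isSigma12.inter
      (hnode.preimage (f := Prod.snd) continuous_snd)).exists_snd using 1
    ext x
    rw [mem_compl_iff, notMem_nodeFreeIdeal]
    constructor
    · rintro ⟨l, hl⟩
      exact ⟨node G l, range_subset_iff.1 hl, mem_iUnion.2 ⟨_, l, rfl, rfl⟩⟩
    · rintro ⟨e, he, hnode⟩
      obtain ⟨n, l, -, rfl⟩ := mem_iUnion.1 hnode
      exact ⟨l, range_subset_iff.2 he⟩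
  exact hcompl

theorem Homog.subset_or_disjoint {A y : Set ℕ} (hy : y.Infinite)
    (hA : Homog {s | ∃ n ∈ A, s = {n}} y) : y ⊆ A ∨ Disjoint y A := by
  rcases hA with hA | hA
  · refine .inl fun n hn => ?_
    obtain ⟨_, ⟨k, hk, rfl⟩, m, hm⟩ :=
      hA (y \ Iio n) sdiff_subset (hy.sdiff (finite_Iio n))
    have hkn : k ∈ (y \ Iio n) ∩ Iic m := by simp [← hm]
    have hn' : n ∈ (({k} : Finset ℕ) : Set ℕ) :=
      hm ▸ ⟨⟨hn, lt_irrefl n⟩, mem_Iic.2 ((not_lt.1 hkn.1.2).trans hkn.2)⟩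
    obtain rfl : n = k := by simpa using hn'
    exact hk
  · exact .inr (disjoint_left.2 fun n hn hnA => hA {n} (by simpa using hn) ⟨n, hnA, rfl⟩)

theorem mem_of_homog_compl {C : Set Cantor} (hC : IsClosed C) (hher : Hereditary C)
    (htall : Tall C) {y : Cantor} (hy : (toSet y).Infinite)
    (hyC : Homog {s : Finset ℕ | (s : Set ℕ).boolIndicator ∉ C} (toSet y)) : y ∈ C := by
  rcases hyC with hyC | hyC
  · obtain ⟨z, hzC, hz, hzy⟩ := htall y hy
    obtain ⟨s, hs, n, hsn⟩ := hyC (toSet z) hzy hz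
    refine absurd (hher z hzC _ ?_) hs
    rw [toSet_boolIndicator, hsn]
    exact inter_subset_left
  · have hlim : Filter.Tendsto (fun n => (toSet y ∩ Iic n).boolIndicator) Filter.atTop
        (nhds y) := by
      refine tendsto_pi_nhds.2 fun i => tendsto_const_nhds.congr' ?_
      filter_upwards [Filter.eventually_ge_atTop i] with n hn
      rw [Bool.eq_iff_iff, ← mem_iff_boolIndicator, mem_inter_iff, and_iff_left (mem_Iic.2 hn)]
      rfl
    refine hC.mem_of_tendsto hlim (.of_forall fun n => not_not.1 ?_)
    have hfin : (toSet y ∩ Iic n).Finite := (finite_Iic n).inter_of_right _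
    simpa using hyC hfin.toFinset (by simp)

namespace IsHomogSelector

theorem strictMono_node (hG : IsHomogSelector G) (l : List Cantor) : StrictMono (node G l) := by
  induction l with
  | nil => exact strictMono_id
  | cons F l ih => exact (ih.comp (strictMono_branchCode F)).comp (hG _).1

theorem infinite_range_node (hG : IsHomogSelector G) (l : List Cantor) :
    (range (node G l)).Infinite :=
  infinite_range_of_injective (hG.strictMono_node l).injective

theorem exists_homog_node (hG : IsHomogSelector G) (𝓕 : Set (Finset ℕ)) (l : List Cantor) :
    ∃ F, Homog 𝓕 (range (node G (F :: l))) := by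
  obtain ⟨F, rfl⟩ := codedFamily_surjective 𝓕
  exact ⟨F, (hG (node G l ∘ branchCode F, F)).2⟩

theorem eq_of_infinite_range_node_inter (hG : IsHomogSelector G) {l l' : List Cantor}
    (hlen : l.length = l'.length) (hinf : (range (node G l) ∩ range (node G l')).Infinite) :
    l = l' := by
  induction l generalizing l' with
  | nil => exact (List.eq_nil_of_length_eq_zero hlen.symm).symm
  | cons F l ih =>
    obtain _ | ⟨F', l'⟩ := l'
    · simp at hlen
    obtain rfl : l = l' := ih (Nat.succ_injective hlen) (hinf.mono (inter_subset_inter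
      (range_node_append_subset [F] l) (range_node_append_subset [F'] l')))
    congr 1
    by_contra hne
    refine hinf (((finite_range_branchCode_inter hne).image (node G l)).subset ?_)
    rw [image_inter (hG.strictMono_node l).injective, ← range_comp, ← range_comp]
    exact inter_subset_inter (range_comp_subset_range _ _) (range_comp_subset_range _ _)

theorem exists_homog_notMem (hG : IsHomogSelector G) {x : Cantor} (hx : x ∉ nodeFreeIdeal G)
    (𝓕 : Set (Finset ℕ)) :
    ∃ y : Cantor, toSet y ⊆ toSet x ∧ (toSet y).Infinite ∧ Homog 𝓕 (toSet y) ∧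
      y ∉ nodeFreeIdeal G := by
  obtain ⟨l, hl⟩ := notMem_nodeFreeIdeal.1 hx
  obtain ⟨F, hF⟩ := hG.exists_homog_node 𝓕 l
  obtain ⟨y, hy⟩ := toSet_surjective (range (node G (F :: l)))
  rw [← hy] at hF
  exact ⟨y, hy ▸ (range_node_append_subset [F] l).trans hl, hy ▸ hG.infinite_range_node _, hF,
    notMem_nodeFreeIdeal.2 ⟨_, hy.ge⟩⟩

theorem isIdeal_nodeFreeIdeal (hG : IsHomogSelector G) : IsIdeal (nodeFreeIdeal G) := by
  refine ⟨fun x hx y hyx l hl => hx l (hl.trans hyx), fun x hx y hy => not_not.1 fun hxy => ?_⟩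
  obtain ⟨z, hzxy, hz, hzhom, hzI⟩ := hG.exists_homog_notMem hxy {s | ∃ n ∈ toSet x, s = {n}}
  obtain ⟨l, hl⟩ := notMem_nodeFreeIdeal.1 hzI
  rcases hzhom.subset_or_disjoint hz with hzx | hzx
  · exact hx l (hl.trans hzx)
  · refine hy l fun n hn => ?_
    have hnxy : (x n || y n) = true := hzxy (hl hn)
    exact (Bool.or_eq_true _ _ ▸ hnxy).resolve_left (disjoint_left.1 hzx (hl hn))

theorem tall_nodeFreeIdeal (hG : IsHomogSelector G) : Tall (nodeFreeIdeal G) := by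
  intro x hx
  by_cases hxI : x ∈ nodeFreeIdeal G
  · exact ⟨x, hxI, hx, Subset.rfl⟩
  obtain ⟨l, hl⟩ := notMem_nodeFreeIdeal.1 hxI
  let F₀ : Cantor := fun _ => false
  let F₁ : Cantor := fun _ => true
  let D (i : ℕ) : Set ℕ := range (node G (List.replicate i F₀ ++ l))
  have hD : Antitone D := antitone_nat_of_succ_le fun i => range_node_append_subset [F₀] _
  obtain ⟨p, hp, hpD⟩ := Filter.extraction_forall_of_frequently fun i =>
    Nat.frequently_atTop_iff_infinite.2 (hG.infinite_range_node (List.replicate i F₀ ++ l))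
  obtain ⟨y, hy⟩ := toSet_surjective (range p)
  refine ⟨y, fun k hk => ?_, hy ▸ infinite_range_of_injective hp.injective, ?_⟩
  · have hk' : range (node G (List.replicate (l.length + 1) F₁ ++ k)) ⊆ range p :=
      (range_node_append_subset _ k).trans (hy ▸ hk)
    have hfin : (range p \ D (k.length + 1)).Finite := by
      refine ((finite_Iio (k.length + 1)).image p).subset ?_
      rintro _ ⟨⟨i, rfl⟩, hi⟩
      exact mem_image_of_mem p (not_le.1 fun hle => hi (hD hle (hpD i)))
    have hinf : (range (node G (List.replicate (l.length + 1) F₁ ++ k)) ∩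
        D (k.length + 1)).Infinite := by
      refine ((hG.infinite_range_node _).sdiff hfin).mono fun n hn => ⟨hn.1, ?_⟩
      exact not_not.1 fun hnD => hn.2 ⟨hk' hn.1, hnD⟩
    have heq := hG.eq_of_infinite_range_node_inter (by simp; omega) hinf
    have hF : F₁ = F₀ := (List.cons.inj heq).1
    exact absurd (congrFun hF 0) (by decide)
  · rw [hy]
    rintro _ ⟨i, rfl⟩
    exact hl (hD (Nat.zero_le i) (hpD i))

theorem not_tall_of_subset_nodeFreeIdeal (hG : IsHomogSelector G) {C : Set Cantor}
    (hCI : C ⊆ nodeFreeIdeal G) (hC : IsClosed C) (hher : Hereditary C) : ¬ Tall C := by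
  intro htall
  have huniv : univ.boolIndicator ∉ nodeFreeIdeal G :=
    notMem_nodeFreeIdeal.2 ⟨[], by simp [toSet_boolIndicator]⟩
  obtain ⟨y, -, hy, hyC, hyI⟩ := hG.exists_homog_notMem huniv
    {s | (s : Set ℕ).boolIndicator ∉ C}
  exact hyI (hCI (mem_of_homog_compl hC hher htall hy hyC))

end IsHomogSelector

end NodeFreeIdeal

/-- There is a tall `Π¹₂` ideal `I` on `ℕ` such that for every `x ∈ I⁺` and every family
`F` of finite subsets of `ℕ` there is an infinite `F`-homogeneous `y ⊆ x` with `y ∈ I⁺`;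
in particular, `I` contains no closed hereditary tall subset of `2^ℕ`. -/
theorem pi12_tall_ideal_no_closed_tall :
    ∃ I : Set Cantor, IsIdeal I ∧ Tall I ∧ Pi12 I ∧
      (∀ x : Cantor, x ∉ I → ∀ F : Set (Finset ℕ),
        ∃ y : Cantor, toSet y ⊆ toSet x ∧ (toSet y).Infinite ∧
          Homog F (toSet y) ∧ y ∉ I) ∧
      (∀ C : Set Cantor, C ⊆ I → IsClosed C → Hereditary C → ¬ Tall C) := by
  obtain ⟨G, hG, hG_graph⟩ := exists_isHomogSelector
  exact ⟨nodeFreeIdeal G, hG.isIdeal_nodeFreeIdeal, hG.tall_nodeFreeIdeal,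
    pi12_nodeFreeIdeal hG_graph, fun x hx 𝓕 => hG.exists_homog_notMem hx 𝓕,
    fun C hCI hC hher => hG.not_tall_of_subset_nodeFreeIdeal hCI hC hher⟩
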